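/- arXiv:2603.27072 — 2 statements merged into one kernel-verified Lean document; each statement's English description precedes it below -/
import Mathlib

section
/- Let L ≥ 3 be an integer, λ > 0, q := 2/L, and let M♮ ∈ ℝ^{d_L × d_0} with r := min{d_0, d_L}. Suppose min_{1 ≤ i ≤ L−1} d_i ≥ min{d_0, d_L}, σ_i(M♮) ≠ τ for every i ∈ {1, …, r}, and σ_1(M♮) > τ, where τ := (1 − q/2)·λ^{1/(2−q)}·(1 − q)^{(q−1)/(2−q)}. Consider 𝓛(W_1, …, W_L) := ‖M♮ − W_L···W_1‖_F² + (λ/L)·Σ_{i=1}^L ‖W_i‖_F² as a smooth function of the N := Σ_{i=1}^L d_i·d_{i−1} scalar entries of the layers. Then for every global minimizer w* = (W*_1, …, W*_L) of 𝓛, the trace of the Hessian of 𝓛 at w* (the sum over all N coordinates of the second partial derivative of 𝓛 in that coordinate, evaluated at w*) satisfies tr(∇²𝓛(w*)) ≥ 2L·‖P*‖_F² / g*² + (2λ/L)·N, where P* := W*_L···W*_1 and g* := ‖W*_1‖_F. -/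
open Matrix

/-- The `i`-th largest singular value of a real matrix `A` (`0`-indexed),
i.e. the non-increasing rearrangement of the square roots of the
eigenvalues of the positive semidefinite matrix `Aᵀ A`. -/
noncomputable def singularValue {m n : ℕ} (A : Matrix (Fin m) (Fin n) ℝ) (i : Fin (min m n)) : ℝ :=
  let ev : Fin n → ℝ := fun j => Real.sqrt ((Matrix.isHermitian_conjTranspose_mul_self A).eigenvalues j)
  (ev ∘ Tuple.sort ev) ((Fin.castLE (Nat.min_le_right m n) i).rev)

/-- Frobenius norm of a real matrix. -/
noncomputable def frobNorm {m n : ℕ} (A : Matrix (Fin m) (Fin n) ℝ) : ℝ :=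
  Real.sqrt (∑ i, ∑ j, (A i j) ^ 2)

/-- `‖A‖_{S^q}^q = ∑_{i=1}^{min m n} σ_i(A)^q`. -/
noncomputable def schattenPow {m n : ℕ} (A : Matrix (Fin m) (Fin n) ℝ) (q : ℝ) : ℝ :=
  ∑ i : Fin (min m n), (singularValue A i) ^ q

/-- Schatten-`q` quasi-norm `‖A‖_{S^q} = (∑ σ_i(A)^q)^{1/q}`. -/
noncomputable def schattenNorm {m n : ℕ} (A : Matrix (Fin m) (Fin n) ℝ) (q : ℝ) : ℝ :=
  (schattenPow A q) ^ (1 / q)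

/-- `chainProd d W L = W_{L-1} * ⋯ * W_1 * W_0` (the end-to-end product of the
first `L` layers, `W_i : ℝ^{d_{i+1} × d_i}`). -/
noncomputable def chainProd (d : ℕ → ℕ) (W : ∀ i : ℕ, Matrix (Fin (d (i + 1))) (Fin (d i)) ℝ) :
    (L : ℕ) → Matrix (Fin (d L)) (Fin (d 0)) ℝ
  | 0 => 1
  | (L + 1) => W L * chainProd d W L

/-- The ℓ²-regularized deep matrix factorization objective
`𝓛(W) = ‖M♮ − W_L ⋯ W_1‖_F² + (λ/L) ∑ᵢ ‖W_i‖_F²`. -/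
noncomputable def deepLoss (L : ℕ) (lam : ℝ) (d : ℕ → ℕ)
    (Mnat : Matrix (Fin (d L)) (Fin (d 0)) ℝ)
    (W : ∀ i : ℕ, Matrix (Fin (d (i + 1))) (Fin (d i)) ℝ) : ℝ :=
  frobNorm (Mnat - chainProd d W L) ^ 2 + (lam / L) * ∑ i : Fin L, frobNorm (W i.1) ^ 2

/-- The Schatten-regularized objective
`𝓛_{M♮}(M) = ‖M♮ − M‖_F² + λ‖M‖_{S^{2/L}}^{2/L}`. -/
noncomputable def schattenLoss (L : ℕ) (lam : ℝ) {m n : ℕ}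
    (Mnat M : Matrix (Fin m) (Fin n) ℝ) : ℝ :=
  frobNorm (Mnat - M) ^ 2 + lam * schattenPow M (2 / L)

/-!
Each layer enters the end-to-end product `P` linearly, `P = A * W i * B`, so `𝓛` restricted to a
line in a single layer is a quadratic polynomial, and summing its second derivatives over the
coordinates of layer `i` gives exactly `2 ‖A‖² ‖B‖² + (2λ/L) d_{i+1} d_i`.
Stationarity under rescaling layer `i` reads `(λ/L) ‖W i‖² = ⟨M♮ - P, P⟩`, whose right-hand side
does not depend on `i`; so all layers have the same norm `g`, and submultiplicativity of the
Frobenius norm yields `‖P‖² / g² ≤ ‖A‖² ‖B‖²` for each of the `L` layers.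
-/

section Frobenius

open scoped Matrix.Norms.Frobenius

variable {m n p r : ℕ}

theorem frobNorm_nonneg (A : Matrix (Fin m) (Fin n) ℝ) : 0 ≤ frobNorm A :=
  Real.sqrt_nonneg _

theorem frobNorm_sq (A : Matrix (Fin m) (Fin n) ℝ) : frobNorm A ^ 2 = ∑ i, ∑ j, A i j ^ 2 :=
  Real.sq_sqrt (by positivity)

theorem frobNorm_eq_norm (A : Matrix (Fin m) (Fin n) ℝ) : frobNorm A = ‖A‖ := by
  simp [frobNorm, Matrix.frobenius_norm_def, Real.sqrt_eq_rpow]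

theorem frobNorm_eq_zero {A : Matrix (Fin m) (Fin n) ℝ} : frobNorm A = 0 ↔ A = 0 := by
  rw [frobNorm_eq_norm, norm_eq_zero]

theorem frobNorm_neg (A : Matrix (Fin m) (Fin n) ℝ) : frobNorm (-A) = frobNorm A := by
  simp only [frobNorm_eq_norm, norm_neg]

theorem frobNorm_mul_le (A : Matrix (Fin m) (Fin n) ℝ) (B : Matrix (Fin n) (Fin p) ℝ) :
    frobNorm (A * B) ≤ frobNorm A * frobNorm B := by
  simpa only [frobNorm_eq_norm] using Matrix.frobenius_norm_mul A B

theorem frobNorm_add_smul_sq (A B : Matrix (Fin m) (Fin n) ℝ) (t : ℝ) :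
    frobNorm (A + t • B) ^ 2 =
      frobNorm A ^ 2 + 2 * (A * Bᵀ).trace * t + frobNorm B ^ 2 * t ^ 2 := by
  simp only [frobNorm_sq, Matrix.trace, Matrix.diag_apply, Matrix.mul_apply,
    Matrix.transpose_apply, Matrix.add_apply, Matrix.smul_apply, smul_eq_mul, Finset.mul_sum,
    Finset.sum_mul, ← Finset.sum_add_distrib]
  congr! 2
  ring

theorem trace_mul_transpose_self (A : Matrix (Fin m) (Fin n) ℝ) :
    (A * Aᵀ).trace = frobNorm A ^ 2 := by
  rw [frobNorm_sq]
  simp only [Matrix.trace, Matrix.diag_apply, Matrix.mul_apply, Matrix.transpose_apply, sq]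

theorem frobNorm_single_one (a : Fin m) (b : Fin n) : frobNorm (Matrix.single a b (1 : ℝ)) = 1 := by
  simp [frobNorm, Matrix.single_apply, ite_and]

theorem mul_single_one_mul_apply {R ι κ μ ν : Type*} [Semiring R] [Fintype κ] [Fintype μ]
    [DecidableEq κ] [DecidableEq μ] (A : Matrix ι κ R) (B : Matrix μ ν R) (a : κ) (b : μ)
    (i : ι) (j : ν) : (A * Matrix.single a b (1 : R) * B) i j = A i a * B b j := by
  simp [Matrix.mul_apply, Matrix.single_apply, ite_and]

theorem sum_frobNorm_mul_single_one_mul_sq (A : Matrix (Fin m) (Fin n) ℝ)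
    (B : Matrix (Fin p) (Fin r) ℝ) :
    ∑ a : Fin n, ∑ b : Fin p, frobNorm (A * Matrix.single a b (1 : ℝ) * B) ^ 2 =
      frobNorm A ^ 2 * frobNorm B ^ 2 := by
  simp only [frobNorm_sq, mul_single_one_mul_apply, mul_pow, ← Finset.sum_mul_sum]
  rw [Finset.sum_comm]

end Frobenius

section ChainProd

variable (d : ℕ → ℕ) (W : ∀ i : ℕ, Matrix (Fin (d (i + 1))) (Fin (d i)) ℝ)

/-- `chainProdFrom d W h = W_{L-1} * ⋯ * W_k` for `h : k ≤ L`, the product of the layers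
`k, …, L - 1`. It is defined by recursion on the proof of `k ≤ L`, which avoids casting along
`k + (L - k) = L` in the dimensions. -/
noncomputable def chainProdFrom {k L : ℕ} (h : k ≤ L) : Matrix (Fin (d L)) (Fin (d k)) ℝ :=
  Nat.leRec (motive := fun L _ => Matrix (Fin (d L)) (Fin (d k)) ℝ) 1 (fun L _ A => W L * A) h

theorem chainProdFrom_self (k : ℕ) : chainProdFrom d W (le_refl k) = 1 :=
  Nat.leRec_self ..

theorem chainProdFrom_succ {k L : ℕ} (h : k ≤ L) :
    chainProdFrom d W (h.trans L.le_succ) = W L * chainProdFrom d W h :=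
  Nat.leRec_succ ..

variable {i : ℕ} (X : Matrix (Fin (d (i + 1))) (Fin (d i)) ℝ)

theorem chainProd_update_of_le {k : ℕ} (hk : k ≤ i) :
    chainProd d (Function.update W i X) k = chainProd d W k := by
  induction k with
  | zero => rfl
  | succ k ih =>
    rw [chainProd, chainProd, ih (by omega), Function.update_of_ne (by omega)]

theorem chainProd_update_of_lt {L : ℕ} (hi : i < L) :
    chainProd d (Function.update W i X) L = chainProdFrom d W hi * X * chainProd d W i := by
  induction L, hi using Nat.le_induction with
  | base =>
    rw [chainProd, chainProd_update_of_le d W X le_rfl, Function.update_self, chainProdFrom_self,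
      Matrix.one_mul]
  | succ L hL ih =>
    rw [chainProd, ih, Function.update_of_ne (by omega), chainProdFrom_succ d W hL]
    simp only [Matrix.mul_assoc]

theorem chainProd_eq_mul_mul {L : ℕ} (hi : i < L) :
    chainProd d W L = chainProdFrom d W hi * W i * chainProd d W i := by
  simpa only [Function.update_eq_self] using chainProd_update_of_lt d W (W i) hi

theorem frobNorm_chainProd_le {L : ℕ} (hi : i < L) :
    frobNorm (chainProd d W L) ≤
      frobNorm (chainProdFrom d W hi) * frobNorm (W i) * frobNorm (chainProd d W i) := by
  rw [chainProd_eq_mul_mul d W hi]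
  exact (frobNorm_mul_le _ _).trans
    (mul_le_mul_of_nonneg_right (frobNorm_mul_le _ _) (frobNorm_nonneg _))

end ChainProd

section Quadratic

variable {𝕜 : Type*} [NontriviallyNormedField 𝕜]

theorem hasDerivAt_quadratic (a b c t : 𝕜) :
    HasDerivAt (fun t : 𝕜 => a + b * t + c * t ^ 2) (b + 2 * c * t) t := by
  have hlinear : HasDerivAt (fun t : 𝕜 => a + b * t) (b * 1) t :=
    ((hasDerivAt_id t).const_mul b).const_add a
  refine (hlinear.add ((hasDerivAt_pow 2 t).const_mul c)).congr_deriv ?_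
  simp only [mul_one, Nat.cast_ofNat, Nat.add_one_sub_one, pow_one]
  ring

theorem deriv_quadratic_zero (a b c : 𝕜) :
    deriv (fun t : 𝕜 => a + b * t + c * t ^ 2) 0 = b := by
  simpa using (hasDerivAt_quadratic a b c 0).deriv

theorem iteratedDeriv_two_quadratic (a b c t : 𝕜) :
    iteratedDeriv 2 (fun t : 𝕜 => a + b * t + c * t ^ 2) t = 2 * c := by
  have hderiv : deriv (fun t : 𝕜 => a + b * t + c * t ^ 2) = fun t => b + 2 * c * t :=
    funext fun t => (hasDerivAt_quadratic a b c t).deriv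
  rw [iteratedDeriv_succ, iteratedDeriv_one, hderiv]
  simp

end Quadratic

section DeepLoss

variable {L : ℕ} (lam : ℝ) (d : ℕ → ℕ) (Mnat : Matrix (Fin (d L)) (Fin (d 0)) ℝ)
  (W : ∀ i : ℕ, Matrix (Fin (d (i + 1))) (Fin (d i)) ℝ)

/-- The line `t ↦ W + t Y` in parameter space that moves only layer `i`. -/
def layerLine (i : ℕ) (Y : Matrix (Fin (d (i + 1))) (Fin (d i)) ℝ) (t : ℝ) :
    ∀ j : ℕ, Matrix (Fin (d (j + 1))) (Fin (d j)) ℝ :=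
  Function.update W i (W i + t • Y)

/-- The trace of the Hessian of `deepLoss` at `W`: the sum of the pure second partial derivatives
over the entries of the layers `0, …, L - 1`. -/
noncomputable def deepLossHessianTrace : ℝ :=
  ∑ i : Fin L, ∑ a, ∑ b,
    iteratedDeriv 2 (fun t => deepLoss L lam d Mnat (layerLine d W i (Matrix.single a b 1) t)) 0

theorem sum_frobNorm_update_sq {i : ℕ} (hi : i < L) (X : Matrix (Fin (d (i + 1))) (Fin (d i)) ℝ) :
    ∑ j : Fin L, frobNorm (Function.update W i X j) ^ 2 =
      ∑ j : Fin L, frobNorm (W j) ^ 2 - frobNorm (W i) ^ 2 + frobNorm X ^ 2 := by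
  have hmem : i ∈ Finset.range L := Finset.mem_range.2 hi
  rw [Fin.sum_univ_eq_sum_range (fun j => frobNorm (Function.update W i X j) ^ 2),
    Fin.sum_univ_eq_sum_range (fun j => frobNorm (W j) ^ 2)]
  simp only [Function.apply_update (fun j (A : Matrix (Fin (d (j + 1))) (Fin (d j)) ℝ) =>
    frobNorm A ^ 2)]
  rw [Finset.sum_update_of_mem hmem, Finset.sum_eq_sum_sdiff_singleton_add hmem]
  ring

theorem deepLoss_layerLine {i : ℕ} (hi : i < L) (Y : Matrix (Fin (d (i + 1))) (Fin (d i)) ℝ)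
    (t : ℝ) :
    deepLoss L lam d Mnat (layerLine d W i Y t) =
      deepLoss L lam d Mnat W +
      (2 * (lam / L * (W i * Yᵀ).trace -
        ((Mnat - chainProd d W L) * (chainProdFrom d W hi * Y * chainProd d W i)ᵀ).trace)) * t +
      (frobNorm (chainProdFrom d W hi * Y * chainProd d W i) ^ 2 +
        lam / L * frobNorm Y ^ 2) * t ^ 2 := by
  have hresidual : Mnat - chainProd d (layerLine d W i Y t) L =
      (Mnat - chainProd d W L) + t • -(chainProdFrom d W hi * Y * chainProd d W i) := by
    rw [layerLine, chainProd_update_of_lt d W _ hi, chainProd_eq_mul_mul d W hi, Matrix.mul_add,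
      Matrix.add_mul, Matrix.mul_smul, Matrix.smul_mul, smul_neg]
    abel
  rw [deepLoss, hresidual, layerLine, sum_frobNorm_update_sq d W hi, frobNorm_add_smul_sq,
    frobNorm_add_smul_sq, frobNorm_neg, deepLoss, Matrix.transpose_neg, Matrix.mul_neg,
    Matrix.trace_neg]
  ring

theorem deriv_deepLoss_layerLine_self {i : ℕ} (hi : i < L) :
    deriv (fun t => deepLoss L lam d Mnat (layerLine d W i (W i) t)) 0 =
      2 * (lam / L * frobNorm (W i) ^ 2 -
        ((Mnat - chainProd d W L) * (chainProd d W L)ᵀ).trace) := by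
  simp only [deepLoss_layerLine lam d Mnat W hi, deriv_quadratic_zero, trace_mul_transpose_self,
    ← chainProd_eq_mul_mul d W hi]

theorem deriv_deepLoss_layerLine_eq_zero_of_forall_le
    (hW : ∀ V, deepLoss L lam d Mnat W ≤ deepLoss L lam d Mnat V) (i : ℕ)
    (Y : Matrix (Fin (d (i + 1))) (Fin (d i)) ℝ) :
    deriv (fun t => deepLoss L lam d Mnat (layerLine d W i Y t)) 0 = 0 := by
  refine IsLocalMin.deriv_eq_zero (Filter.Eventually.of_forall fun t => ?_)
  simpa [layerLine] using hW (layerLine d W i Y t)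

theorem deepLossHessianTrace_eq :
    deepLossHessianTrace lam d Mnat W =
      2 * ∑ i : Fin L, frobNorm (chainProdFrom d W i.isLt) ^ 2 * frobNorm (chainProd d W i) ^ 2 +
        2 * lam / L * ((∑ i : Fin L, d (i + 1) * d i : ℕ) : ℝ) := by
  have hlayer (i : Fin L) : ∑ a, ∑ b,
      iteratedDeriv 2 (fun t => deepLoss L lam d Mnat (layerLine d W i (Matrix.single a b 1) t)) 0 =
      2 * (frobNorm (chainProdFrom d W i.isLt) ^ 2 * frobNorm (chainProd d W i) ^ 2) +
        2 * lam / L * ((d (i + 1) * d i : ℕ) : ℝ) := by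
    simp only [deepLoss_layerLine lam d Mnat W i.isLt, iteratedDeriv_two_quadratic,
      frobNorm_single_one, mul_add, Finset.sum_add_distrib, ← Finset.mul_sum,
      sum_frobNorm_mul_single_one_mul_sq]
    simp only [one_pow, Finset.sum_const, Finset.card_univ, Fintype.card_fin, nsmul_eq_mul, mul_one,
      Nat.cast_mul]
    ring
  rw [deepLossHessianTrace, Finset.sum_congr rfl fun i _ => hlayer i, Finset.sum_add_distrib,
    ← Finset.mul_sum, ← Finset.mul_sum, Nat.cast_sum]

theorem regularizer_le_deepLossHessianTrace :
    2 * lam / L * ((∑ i : Fin L, d (i + 1) * d i : ℕ) : ℝ) ≤ deepLossHessianTrace lam d Mnat W := by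
  rw [deepLossHessianTrace_eq]
  exact le_add_of_nonneg_left (by positivity)

variable {lam d Mnat W}

theorem frobNorm_sq_eq_of_stationary (hlam : lam ≠ 0)
    (hstat : ∀ i : Fin L, deriv (fun t => deepLoss L lam d Mnat (layerLine d W i (W i) t)) 0 = 0)
    (i j : Fin L) : frobNorm (W i) ^ 2 = frobNorm (W j) ^ 2 := by
  have hL : (L : ℝ) ≠ 0 := Nat.cast_ne_zero.2 i.pos.ne'
  have hi := hstat i
  have hj := hstat j
  rw [deriv_deepLoss_layerLine_self lam d Mnat W i.isLt] at hi
  rw [deriv_deepLoss_layerLine_self lam d Mnat W j.isLt] at hj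
  exact mul_left_cancel₀ (div_ne_zero hlam hL) (by linarith)

theorem stmt11_general (hL : 0 < L) (hlam : lam ≠ 0) (hW₀ : W 0 ≠ 0)
    (hstat : ∀ i : Fin L, deriv (fun t => deepLoss L lam d Mnat (layerLine d W i (W i) t)) 0 = 0) :
    2 * L * frobNorm (chainProd d W L) ^ 2 / frobNorm (W 0) ^ 2 +
        (2 * lam / L) * ((∑ i : Fin L, d (i + 1) * d i : ℕ) : ℝ) ≤
      deepLossHessianTrace lam d Mnat W := by
  have hbalanced (i : Fin L) : frobNorm (W i) ^ 2 = frobNorm (W 0) ^ 2 :=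
    frobNorm_sq_eq_of_stationary hlam hstat i ⟨0, hL⟩
  have hpos : 0 < frobNorm (W 0) ^ 2 := by
    have := frobNorm_eq_zero.not.2 hW₀
    positivity
  have hlayer (i : Fin L) : frobNorm (chainProd d W L) ^ 2 / frobNorm (W 0) ^ 2 ≤
      frobNorm (chainProdFrom d W i.isLt) ^ 2 * frobNorm (chainProd d W i) ^ 2 := by
    rw [div_le_iff₀ hpos, ← hbalanced i]
    calc frobNorm (chainProd d W L) ^ 2
        ≤ (frobNorm (chainProdFrom d W i.isLt) * frobNorm (W i) * frobNorm (chainProd d W i)) ^ 2 :=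
          pow_le_pow_left₀ (frobNorm_nonneg _) (frobNorm_chainProd_le d W i.isLt) 2
      _ = _ := by ring
  have hsum := Finset.card_nsmul_le_sum Finset.univ _ _ fun i _ => hlayer i
  rw [Finset.card_univ, Fintype.card_fin, nsmul_eq_mul] at hsum
  rw [deepLossHessianTrace_eq, mul_assoc, mul_div_assoc, mul_div_assoc]
  gcongr

end DeepLoss

/-- Lower bound for the trace of the Hessian of the ℓ²-regularized deep matrix
factorization objective at any global minimizer: the sum over all `N` scalar
coordinates of the pure second partial derivatives of `𝓛` at `w*` is at least
`2L·‖P*‖_F²/g*² + (2λ/L)·N`, where `P*` is the end-to-end product and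
`g* = ‖W*_1‖_F`. -/
theorem stmt11 (L : ℕ) (hL : 3 ≤ L) (lam : ℝ) (hlam : 0 < lam) (q τ : ℝ)
    (hq : q = 2 / L)
    (hτ : τ = (1 - q / 2) * lam ^ (1 / (2 - q)) * (1 - q) ^ ((q - 1) / (2 - q)))
    (d : ℕ → ℕ) (hd0 : 0 < d 0) (hdL : 0 < d L)
    (hdim : ∀ i : ℕ, 1 ≤ i → i ≤ L - 1 → min (d 0) (d L) ≤ d i)
    (Mnat : Matrix (Fin (d L)) (Fin (d 0)) ℝ)
    (hσ : ∀ i : Fin (min (d L) (d 0)), singularValue Mnat i ≠ τ)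
    (hσ1 : τ < singularValue Mnat ⟨0, lt_min hdL hd0⟩)
    (W : ∀ i : ℕ, Matrix (Fin (d (i + 1))) (Fin (d i)) ℝ)
    (hW : ∀ V : ∀ i : ℕ, Matrix (Fin (d (i + 1))) (Fin (d i)) ℝ,
      deepLoss L lam d Mnat W ≤ deepLoss L lam d Mnat V) :
    2 * L * frobNorm (chainProd d W L) ^ 2 / frobNorm (W 0) ^ 2 +
        (2 * lam / L) * ((∑ i : Fin L, d (i.1 + 1) * d i.1 : ℕ) : ℝ) ≤
      ∑ i : Fin L, ∑ a : Fin (d (i.1 + 1)), ∑ b : Fin (d i.1),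
        iteratedDeriv 2 (fun t : ℝ =>
          deepLoss L lam d Mnat
            (Function.update W i.1 (W i.1 + t • Matrix.single a b 1))) 0 := by
  change _ ≤ deepLossHessianTrace lam d Mnat W
  by_cases hW₀ : W 0 = 0
  · -- The quotient is `‖P‖² / 0 = 0`, and only the regularizer contributes.
    simpa only [frobNorm_eq_zero.2 hW₀, zero_pow two_ne_zero, div_zero, zero_add] using
      regularizer_le_deepLossHessianTrace lam d Mnat W
  · exact stmt11_general (by omega) hlam.ne' hW₀ fun i =>
      deriv_deepLoss_layerLine_eq_zero_of_forall_le lam d Mnat W hW i (W i)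
end

section
/- Let A ∈ ℝ^{m×k}, B ∈ ℝ^{k×n}, and r := min{rank(A), rank(B)}. Then for every p > 0, Σ_{i=1}^{r} σ_i(AB)^p ≤ Σ_{i=1}^{r} σ_i(A)^p · σ_i(B)^p, where σ_i denotes the i-th largest singular value. -/
open Matrix

/-!
If `σ₀ ≥ σ₁ ≥ …` are the singular values of `T`, then the Gram determinant of `T v₁, …, T vₗ` is
at most `σ₀² ⋯ σₗ₋₁²` times that of `v₁, …, vₗ`: by the Cauchy–Binet formula in an eigenbasis of
`T* T`, the former is a combination of nonnegative terms weighted by products of `l` distinct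
`σᵢ²`, and the latter is the same combination without the weights. Equality holds for the
leading eigenvectors. Taking these for `S T` and applying the bound to `S` and then to `T` gives
Horn's inequality `∏_{i<l} σᵢ(S T) ≤ ∏_{i<l} σᵢ(S) σᵢ(T)`, hence the same for `p`-th powers. For
a nonincreasing nonnegative sequence `x`, the inequalities `∏_{i<l} xᵢ ≤ ∏_{i<l} yᵢ` for all `l`
imply `∑ xᵢ ≤ ∑ yᵢ`, because `xᵢ (log yᵢ - log xᵢ) ≤ yᵢ - xᵢ` and the left-hand sides have a
nonnegative sum by Abel summation.
-/

open Module Finset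
open scoped ComplexOrder InnerProductSpace Nat

section CauchyBinet

variable {ι κ R : Type*} [Fintype ι] [DecidableEq ι] [Fintype κ] [CommRing R]

lemma det_mul_eq_sum_prod_mul_det_submatrix (M : Matrix ι κ R) (N : Matrix κ ι R) :
    (M * N).det = ∑ f : ι → κ, (∏ i, M i (f i)) * (N.submatrix f id).det := by
  classical
  have row_eq_sum : M * N = fun i => ∑ j, M i j • N j := by
    ext i j
    simp [mul_apply]
  let D : MultilinearMap R (fun _ : ι => ι → R) R := detRowAlternating.toMultilinearMap
  calc (M * N).det = D fun i => ∑ j, M i j • N j := congrArg D row_eq_sum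
    _ = ∑ f : ι → κ, D fun i => M i (f i) • N (f i) := D.map_sum _
    _ = ∑ f : ι → κ, (∏ i, M i (f i)) * (N.submatrix f id).det :=
        sum_congr rfl fun f _ => D.map_smul_univ _ _

/-- The Cauchy–Binet formula. Summing over all functions `f` instead of over subsets of `κ` counts
each subset once per ordering, which produces the factorial. -/
lemma factorial_card_mul_det_mul (M : Matrix ι κ R) (N : Matrix κ ι R) :
    ((Fintype.card ι)! : R) * (M * N).det =
      ∑ f : ι → κ, (M.submatrix id f).det * (N.submatrix f id).det := by
  have det_eq_of_perm (σ : Equiv.Perm ι) : (M * N).det =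
      ∑ f : ι → κ, (Equiv.Perm.sign σ : R) * (∏ i, M i (f (σ i))) * (N.submatrix f id).det := by
    rw [det_mul_eq_sum_prod_mul_det_submatrix, ← (σ.arrowCongr (Equiv.refl κ)).symm.sum_comp]
    refine sum_congr rfl fun f _ => ?_
    have det_comp : (N.submatrix (f ∘ σ) id).det =
        (Equiv.Perm.sign σ : R) * (N.submatrix f id).det :=
      det_permute σ (N.submatrix f id)
    change (∏ i, M i (f (σ i))) * (N.submatrix (f ∘ σ) id).det = _
    rw [det_comp]
    ring
  calc ((Fintype.card ι)! : R) * (M * N).det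
      = ∑ _σ : Equiv.Perm ι, (M * N).det := by simp [Fintype.card_perm]
    _ = ∑ f : ι → κ, ∑ σ : Equiv.Perm ι,
          (Equiv.Perm.sign σ : R) * (∏ i, M i (f (σ i))) * (N.submatrix f id).det := by
        rw [sum_comm]
        exact sum_congr rfl fun σ _ => det_eq_of_perm σ
    _ = ∑ f : ι → κ, (M.submatrix id f).det * (N.submatrix f id).det := by
        refine sum_congr rfl fun f _ => ?_
        rw [← sum_mul, ← det_transpose (M.submatrix id f), det_apply' (M.submatrix id f)ᵀ]
        rfl

lemma factorial_card_mul_det_conjTranspose_mul_diagonal_mul [StarRing R] [DecidableEq κ]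
    (d : κ → R) (C : Matrix κ ι R) :
    ((Fintype.card ι)! : R) * (Cᴴ * diagonal d * C).det =
      ∑ f : ι → κ, (∏ i, d (f i)) * (star (C.submatrix f id).det * (C.submatrix f id).det) := by
  rw [factorial_card_mul_det_mul]
  refine sum_congr rfl fun f _ => ?_
  have submatrix_eq :
      (Cᴴ * diagonal d).submatrix id f = (C.submatrix f id)ᴴ * diagonal (d ∘ f) := by
    ext i j
    simp
  rw [submatrix_eq, det_mul, det_conjTranspose, det_diagonal]
  simp only [Function.comp_apply]
  ring

end CauchyBinet

lemma prod_le_prod_range_card {R : Type*} [CommSemiring R] [PartialOrder R] [IsOrderedRing R]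
    {d : ℕ → R} (hd : Antitone d) (hd0 : ∀ i, 0 ≤ d i) (s : Finset ℕ) :
    ∏ i ∈ s, d i ≤ ∏ i ∈ range #s, d i := by
  induction s using Finset.induction_on_max with
  | empty => simp
  | insert a s lt_a ih =>
    have a_notMem : a ∉ s := fun ha => (lt_a a ha).false
    have card_le : #s ≤ a := by
      simpa using card_le_card fun x hx => mem_range.2 (lt_a x hx)
    rw [prod_insert a_notMem, card_insert_of_notMem a_notMem, prod_range_succ_comm]
    exact mul_le_mul (hd card_le) ih (prod_nonneg fun i _ => hd0 i) (hd0 _)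

section GramDeterminant

variable {𝕜 ι : Type*} [RCLike 𝕜] [Fintype ι] [DecidableEq ι]

lemma det_conjTranspose_mul_diagonal_mul_le {n : ℕ} {d : ℕ → 𝕜} (hd : Antitone d)
    (hd0 : ∀ i, 0 ≤ d i) (C : Matrix (Fin n) ι 𝕜) :
    (Cᴴ * diagonal (fun i : Fin n => d i) * C).det ≤
      (∏ i ∈ range (Fintype.card ι), d i) * (Cᴴ * C).det := by
  have factorial_pos : (0 : 𝕜) < ((Fintype.card ι)! : 𝕜) := by
    exact_mod_cast Nat.factorial_pos _
  refine le_of_mul_le_mul_left ?_ factorial_pos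
  have expand_one := factorial_card_mul_det_conjTranspose_mul_diagonal_mul (fun _ => 1) C
  simp only [diagonal_one, Matrix.mul_one, prod_const_one, one_mul] at expand_one
  rw [factorial_card_mul_det_conjTranspose_mul_diagonal_mul, mul_left_comm, expand_one, mul_sum]
  refine sum_le_sum fun f _ => ?_
  by_cases hf : Function.Injective f
  · refine mul_le_mul_of_nonneg_right ?_ (star_mul_self_nonneg _)
    have val_injective : Function.Injective fun i => (f i : ℕ) := Fin.val_injective.comp hf
    simpa [prod_map] using prod_le_prod_range_card hd hd0 (univ.map ⟨_, val_injective⟩)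
  · obtain ⟨i, j, hij, hne⟩ := Function.not_injective_iff.1 hf
    have det_zero : (C.submatrix f id).det = 0 :=
      det_zero_of_row_eq hne (by ext; simp [hij])
    simp [det_zero]

variable {E F : Type*} [NormedAddCommGroup E] [InnerProductSpace 𝕜 E] [FiniteDimensional 𝕜 E]
  [NormedAddCommGroup F] [InnerProductSpace 𝕜 F] [FiniteDimensional 𝕜 F]

lemma exists_orthonormalBasis_inner_map_map (T : E →ₗ[𝕜] F) :
    ∃ b : OrthonormalBasis (Fin (finrank 𝕜 E)) 𝕜 E, ∀ i x,
      ⟪T (b i), T x⟫_𝕜 = ((T.singularValues i ^ 2 : ℝ) : 𝕜) * b.repr x i := by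
  refine ⟨T.isSymmetric_adjoint_comp_self.eigenvectorBasis rfl, fun i x => ?_⟩
  rw [T.sq_singularValues_fin rfl, ← LinearMap.IsSymmetric.eigenvectorBasis_apply_self_apply,
    OrthonormalBasis.repr_apply_apply, LinearMap.comp_apply, LinearMap.adjoint_inner_right]

lemma det_gram_map_le (T : E →ₗ[𝕜] F) (v : ι → E) :
    (gram 𝕜 (T ∘ v)).det ≤
      (∏ i ∈ range (Fintype.card ι), ((T.singularValues i ^ 2 : ℝ) : 𝕜)) * (gram 𝕜 v).det := by
  obtain ⟨b, hb⟩ := exists_orthonormalBasis_inner_map_map T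
  have gram_map_eq : gram 𝕜 (T ∘ v) =
      (of fun i j => b.repr (v j) i)ᴴ *
        diagonal (fun i : Fin (finrank 𝕜 E) => ((T.singularValues i ^ 2 : ℝ) : 𝕜)) *
        (of fun i j => b.repr (v j) i) := by
    ext i j
    have expand : T (v i) = ∑ k, b.repr (v i) k • T (b k) := by
      simp_rw [← map_smul, ← map_sum, b.sum_repr]
    rw [mul_apply]
    simp [expand, sum_inner, inner_smul_left, hb, mul_assoc]
  rw [gram_map_eq, gram_eq_conjTranspose_mul b v]
  refine det_conjTranspose_mul_diagonal_mul_le (d := fun i => ((T.singularValues i ^ 2 : ℝ) : 𝕜))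
    (fun i j hij => ?_) (fun i => ?_) _
  · exact RCLike.ofReal_le_ofReal.2
      (pow_le_pow_left₀ (T.singularValues_nonneg j) (T.singularValues_antitone hij) 2)
  · exact RCLike.ofReal_nonneg.2 (sq_nonneg _)

lemma exists_orthonormal_det_gram_map_eq (T : E →ₗ[𝕜] F) {l : ℕ} (hl : l ≤ finrank 𝕜 E) :
    ∃ v : Fin l → E, Orthonormal 𝕜 v ∧
      (gram 𝕜 (T ∘ v)).det = ∏ i ∈ range l, ((T.singularValues i ^ 2 : ℝ) : 𝕜) := by
  obtain ⟨b, hb⟩ := exists_orthonormalBasis_inner_map_map T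
  refine ⟨b ∘ Fin.castLE hl, b.orthonormal.comp _ (Fin.castLE_injective hl), ?_⟩
  have gram_eq_diagonal : gram 𝕜 (T ∘ b ∘ Fin.castLE hl) =
      diagonal fun i : Fin l => ((T.singularValues i ^ 2 : ℝ) : 𝕜) := by
    ext i j
    simp [gram_apply, hb, diagonal_apply, PiLp.single_apply]
  rw [gram_eq_diagonal, det_diagonal, prod_range]

end GramDeterminant

section Horn

variable {𝕜 E F G : Type*} [RCLike 𝕜]
  [NormedAddCommGroup E] [InnerProductSpace 𝕜 E] [FiniteDimensional 𝕜 E]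
  [NormedAddCommGroup F] [InnerProductSpace 𝕜 F] [FiniteDimensional 𝕜 F]
  [NormedAddCommGroup G] [InnerProductSpace 𝕜 G] [FiniteDimensional 𝕜 G]

lemma prod_singularValues_comp_sq_le (S : F →ₗ[𝕜] G) (T : E →ₗ[𝕜] F) {l : ℕ}
    (hl : l ≤ finrank 𝕜 E) :
    ∏ i ∈ range l, (S ∘ₗ T).singularValues i ^ 2 ≤
      (∏ i ∈ range l, S.singularValues i ^ 2) * ∏ i ∈ range l, T.singularValues i ^ 2 := by
  obtain ⟨v, hv, det_eq⟩ := exists_orthonormal_det_gram_map_eq (S ∘ₗ T) hl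
  have hS := det_gram_map_le S (T ∘ v)
  have hT := det_gram_map_le T v
  rw [gram_eq_one_iff_orthonormal.2 hv, det_one, mul_one] at hT
  rw [Fintype.card_fin] at hS hT
  refine (RCLike.ofReal_le_ofReal (K := 𝕜)).1 ?_
  push_cast at hS hT det_eq ⊢
  rw [← det_eq]
  exact hS.trans (mul_le_mul_of_nonneg_left hT (prod_nonneg fun i _ => by
    exact_mod_cast sq_nonneg (S.singularValues i)))

lemma prod_singularValues_comp_le (S : F →ₗ[𝕜] G) (T : E →ₗ[𝕜] F) (l : ℕ) :
    ∏ i ∈ range l, (S ∘ₗ T).singularValues i ≤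
      ∏ i ∈ range l, S.singularValues i * T.singularValues i := by
  have rhs_nonneg : 0 ≤ ∏ i ∈ range l, S.singularValues i * T.singularValues i :=
    prod_nonneg fun i _ => mul_nonneg (S.singularValues_nonneg i) (T.singularValues_nonneg i)
  rcases le_or_gt l (finrank 𝕜 E) with hl | hl
  · refine le_of_sq_le_sq ?_ rhs_nonneg
    simpa only [← prod_pow, mul_pow, prod_mul_distrib] using prod_singularValues_comp_sq_le S T hl
  · rwa [prod_eq_zero (mem_range.2 hl) ((S ∘ₗ T).singularValues_of_finrank_le le_rfl)]

end Horn

section LogMajorization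

lemma sum_range_mul_nonneg_of_antitone {R : Type*} [Ring R] [PartialOrder R] [IsOrderedRing R]
    {x c : ℕ → R} (hx : Antitone x) (hx0 : ∀ i, 0 ≤ x i) {n : ℕ}
    (hc : ∀ l ≤ n, 0 ≤ ∑ i ∈ range l, c i) :
    0 ≤ ∑ i ∈ range n, x i * c i := by
  simp_rw [← smul_eq_mul]
  rw [sum_range_by_parts, sub_nonneg]
  calc ∑ i ∈ range (n - 1), (x (i + 1) - x i) • ∑ j ∈ range (i + 1), c j
      ≤ 0 := sum_nonpos fun i hi => mul_nonpos_of_nonpos_of_nonneg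
        (sub_nonpos.2 (hx i.le_succ)) (hc _ (by have := mem_range.1 hi; omega))
    _ ≤ x (n - 1) • ∑ j ∈ range n, c j := mul_nonneg (hx0 _) (hc n le_rfl)

lemma mul_log_sub_log_le_sub {a b : ℝ} (ha : 0 < a) (hb : 0 < b) :
    a * (Real.log b - Real.log a) ≤ b - a := by
  rw [← Real.log_div hb.ne' ha.ne']
  calc a * Real.log (b / a) ≤ a * (b / a - 1) :=
        mul_le_mul_of_nonneg_left (Real.log_le_sub_one_of_pos (div_pos hb ha)) ha.le
    _ = b - a := by field_simp

variable {x y : ℕ → ℝ} {n : ℕ}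

lemma sum_range_le_of_prod_range_le_of_pos (hx : Antitone x) (hx0 : ∀ i, 0 ≤ x i)
    (hxpos : ∀ i < n, 0 < x i) (hypos : ∀ i < n, 0 < y i)
    (hprod : ∀ l ≤ n, ∏ i ∈ range l, x i ≤ ∏ i ∈ range l, y i) :
    ∑ i ∈ range n, x i ≤ ∑ i ∈ range n, y i := by
  have sum_log_nonneg : ∀ l ≤ n, 0 ≤ ∑ i ∈ range l, (Real.log (y i) - Real.log (x i)) := by
    intro l hl
    have hxl : ∀ i ∈ range l, 0 < x i := fun i hi => hxpos i ((mem_range.1 hi).trans_le hl)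
    have hyl : ∀ i ∈ range l, 0 < y i := fun i hi => hypos i ((mem_range.1 hi).trans_le hl)
    rw [sum_sub_distrib, ← Real.log_prod fun i hi => (hxl i hi).ne',
      ← Real.log_prod fun i hi => (hyl i hi).ne']
    exact sub_nonneg.2 (Real.log_le_log (prod_pos hxl) (hprod l hl))
  rw [← sub_nonneg, ← sum_sub_distrib]
  calc 0 ≤ ∑ i ∈ range n, x i * (Real.log (y i) - Real.log (x i)) :=
        sum_range_mul_nonneg_of_antitone hx hx0 sum_log_nonneg
    _ ≤ ∑ i ∈ range n, (y i - x i) := sum_le_sum fun i hi =>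
        mul_log_sub_log_le_sub (hxpos i (mem_range.1 hi)) (hypos i (mem_range.1 hi))

lemma sum_range_le_of_prod_range_le (hx : Antitone x) (hx0 : ∀ i, 0 ≤ x i) (hy0 : ∀ i, 0 ≤ y i)
    (hprod : ∀ l ≤ n, ∏ i ∈ range l, x i ≤ ∏ i ∈ range l, y i) :
    ∑ i ∈ range n, x i ≤ ∑ i ∈ range n, y i := by
  induction n with
  | zero => simp
  | succ n ih =>
    rcases (hx0 n).eq_or_lt with hxn | hxn
    · rw [sum_range_succ, sum_range_succ, ← hxn]
      exact add_le_add (ih fun l hl => hprod l (hl.trans n.le_succ)) (hy0 n)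
    · have hxpos : ∀ i < n + 1, 0 < x i := fun i hi => hxn.trans_le (hx (Nat.lt_succ_iff.1 hi))
      have prod_y_pos : 0 < ∏ i ∈ range (n + 1), y i :=
        (prod_pos fun i hi => hxpos i (mem_range.1 hi)).trans_le (hprod _ le_rfl)
      have hypos : ∀ i < n + 1, 0 < y i := fun i hi =>
        (hy0 i).lt_of_ne' (prod_ne_zero_iff.1 prod_y_pos.ne' i (mem_range.2 hi))
      exact sum_range_le_of_prod_range_le_of_pos hx hx0 hxpos hypos hprod

end LogMajorization

section SingularValueOfMatrix

lemma comp_sort_rev_eq_of_antitone_comp {α : Type*} [LinearOrder α] {n : ℕ} {f : Fin n → α}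
    {e : Equiv.Perm (Fin n)} (he : Antitone (f ∘ e)) (i : Fin n) :
    (f ∘ Tuple.sort f) i.rev = f (e i) := by
  have rev_monotone : Monotone (f ∘ (Fin.revPerm.trans e)) := fun i j hij =>
    he (Fin.rev_le_rev.2 hij)
  simpa using congrFun (Tuple.unique_monotone (Tuple.monotone_sort f) rev_monotone) i.rev

lemma exists_perm_sqrt_eigenvalues_eq_singularValues {𝕜 μ : Type*} [RCLike 𝕜] [Fintype μ]
    {n : ℕ} (A : Matrix μ (Fin n) 𝕜) :
    ∃ e : Equiv.Perm (Fin n), ∀ i,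
      √((isHermitian_conjTranspose_mul_self A).eigenvalues (e i)) =
        (toEuclideanLin A).singularValues i := by
  classical
  have adjoint_comp_self_eq : toEuclideanLin (Aᴴ * A) =
      (toEuclideanLin A).adjoint ∘ₗ toEuclideanLin A := by
    rw [← toEuclideanLin_conjTranspose_eq_adjoint]
    exact toLpLin_mul_same 2 Aᴴ A
  refine ⟨(finCongr (Fintype.card_fin n).symm).trans
    (Fintype.equivOfCardEq (Fintype.card_fin _)), fun i => ?_⟩
  rw [IsHermitian.eigenvalues, IsHermitian.eigenvalues₀]
  simp only [adjoint_comp_self_eq]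
  simp [← LinearMap.singularValues_fin]

lemma singularValue_eq_singularValues_toEuclideanLin {m n : ℕ} (A : Matrix (Fin m) (Fin n) ℝ)
    (i : Fin (min m n)) : singularValue A i = (toEuclideanLin A).singularValues i := by
  obtain ⟨e, he⟩ := exists_perm_sqrt_eigenvalues_eq_singularValues A
  let sqrtEigenvalues : Fin n → ℝ :=
    fun j => √((isHermitian_conjTranspose_mul_self A).eigenvalues j)
  have antitone_comp : Antitone (sqrtEigenvalues ∘ e) := fun j k hjk => by
    simpa only [sqrtEigenvalues, Function.comp_apply, he] using
      (toEuclideanLin A).singularValues_antitone hjk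
  exact (comp_sort_rev_eq_of_antitone_comp antitone_comp _).trans (he _)

end SingularValueOfMatrix

theorem stmt14_general {𝕜 E F G : Type*} [RCLike 𝕜]
    [NormedAddCommGroup E] [InnerProductSpace 𝕜 E] [FiniteDimensional 𝕜 E]
    [NormedAddCommGroup F] [InnerProductSpace 𝕜 F] [FiniteDimensional 𝕜 F]
    [NormedAddCommGroup G] [InnerProductSpace 𝕜 G] [FiniteDimensional 𝕜 G]
    (S : F →ₗ[𝕜] G) (T : E →ₗ[𝕜] F) (r : ℕ) {p : ℝ} (hp : 0 < p) :
    ∑ i ∈ range r, (S ∘ₗ T).singularValues i ^ p ≤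
      ∑ i ∈ range r, S.singularValues i ^ p * T.singularValues i ^ p := by
  have hS := S.singularValues_nonneg
  have hT := T.singularValues_nonneg
  have hST := (S ∘ₗ T).singularValues_nonneg
  simp_rw [← Real.mul_rpow (hS _) (hT _)]
  refine sum_range_le_of_prod_range_le
    (fun i j hij => Real.rpow_le_rpow (hST j) ((S ∘ₗ T).singularValues_antitone hij) hp.le)
    (fun i => Real.rpow_nonneg (hST i) p)
    (fun i => Real.rpow_nonneg (mul_nonneg (hS i) (hT i)) p) fun l _ => ?_
  rw [Real.finsetProd_rpow _ _ fun i _ => hST i,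
    Real.finsetProd_rpow _ _ fun i _ => mul_nonneg (hS i) (hT i)]
  exact Real.rpow_le_rpow (prod_nonneg fun i _ => hST i) (prod_singularValues_comp_le S T l) hp.le

/-- For `A ∈ ℝ^{m×k}`, `B ∈ ℝ^{k×n}`, `r = min{rank A, rank B}` and any `p > 0`:
`∑_{i=1}^r σᵢ(AB)^p ≤ ∑_{i=1}^r σᵢ(A)^p·σᵢ(B)^p`. -/
theorem stmt14 (m k n : ℕ) (A : Matrix (Fin m) (Fin k) ℝ) (B : Matrix (Fin k) (Fin n) ℝ)
    (p : ℝ) (hp : 0 < p) :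
    ∑ i : Fin (min A.rank B.rank),
        singularValue (A * B)
          (Fin.castLE (le_min ((min_le_left _ _).trans (Matrix.rank_le_height A))
            ((min_le_right _ _).trans (Matrix.rank_le_width B))) i) ^ p ≤
      ∑ i : Fin (min A.rank B.rank),
        singularValue A
            (Fin.castLE (le_min ((min_le_left _ _).trans (Matrix.rank_le_height A))
              ((min_le_left _ _).trans (Matrix.rank_le_width A))) i) ^ p *
          singularValue B
            (Fin.castLE (le_min ((min_le_right _ _).trans (Matrix.rank_le_height B))
              ((min_le_right _ _).trans (Matrix.rank_le_width B))) i) ^ p := by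
  simp only [singularValue_eq_singularValues_toEuclideanLin, Fin.val_castLE, toLpLin_mul_same,
    ← sum_range fun i => (toEuclideanLin A ∘ₗ toEuclideanLin B).singularValues i ^ p,
    ← sum_range fun i =>
      (toEuclideanLin A).singularValues i ^ p * (toEuclideanLin B).singularValues i ^ p]
  exact stmt14_general (toEuclideanLin A) (toEuclideanLin B) _ hp
end
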